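/- The asymptotic variance of the test statistic S under rerandomization equals λ_1² + λ_2² β_ex^t Var(ξ^RR_ex) β_ex = (σ_ε² + v_a · Σ_{j=1}^q β_{p+j}² Var(X_{p+j})) / (σ_ε² + Σ_{j=1}^q β_{p+j}² Var(X_{p+j})), where v_a = (2/(p+q)) · γ((p+q)/2 + 1, a/2) / γ((p+q)/2, a/2) and γ(b,c) = ∫_0^c y^{b−1} e^{−y} dy; in particular, v_a < 1 for every a > 0. -/

import Mathlib

/-!
Write `n = p + q`, let `x` be standard Gaussian in `ℝⁿ` and condition on the ball `‖x‖² < a`. The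
conditional law is invariant under all linear isometries. Invariance under `x ↦ -x` makes
`⟪u, x⟫` centred, and invariance under reflections makes its second moment proportional to `‖u‖²`;
summing over an orthonormal basis gives
`E[⟪u, x⟫² | ‖x‖² < a] = ‖u‖² E[‖x‖² | ‖x‖² < a] / n` (`setIntegral_ball_inner_sq`).

The conditional mean of `‖x‖²` is a ratio of two radial integrals. In polar coordinates these are
`∫ y ^ (n - 1 + 2k) e ^ (-y² / 2)` over `0 < y`, `y² < a`, for `k = 1` and `k = 0`, up to a common
factor, and `t = y² / 2` turns them into incomplete gamma functions (`integral_radial_eq_incGamma`).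
The ratio is `2 γ(n/2 + 1, a/2) / γ(n/2, a/2)`, which yields `v_a ‖u‖²` for the variance of
`⟪u, x⟫`. The statistic corresponds to `u = (0, β_j √Var(X_j))`.

The bound `v_a < 1` is the recurrence `γ(b + 1, c) = b γ(b, c) - c ^ b e ^ (-c)` at `b = n/2`.
-/

open MeasureTheory ProbabilityTheory Filter Topology Matrix

noncomputable section

namespace CARPaper

variable {Ω : Type*} [MeasurableSpace Ω]

/-- Convergence in probability (to a constant). -/
def TendstoInProb {E : Type*} [Dist E] (μ : Measure Ω) (Z : ℕ → Ω → E) (c : E) : Prop :=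
  ∀ ε : ℝ, 0 < ε → Tendsto (fun n => μ {ω | ε ≤ dist (Z n ω) c}) atTop (𝓝 0)

/-- Convergence in distribution: integrals of bounded continuous test functions converge. -/
def TendstoInDist {E : Type*} [TopologicalSpace E] [MeasurableSpace E]
    (μ : Measure Ω) (Z : ℕ → Ω → E) (ν : Measure E) : Prop :=
  ∀ f : BoundedContinuousFunction E ℝ,
    Tendsto (fun n => ∫ ω, f (Z n ω) ∂μ) atTop (𝓝 (∫ y, f y ∂ν))

variable (p q : ℕ)

/-- The law `ξ^RR` of `Σ^{1/2} D` conditional on `DᵗD < a`, where `D ~ N(0, I_{p+q})`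
and `Σ = diag(Var(X₁), …, Var(X_{p+q}))`. -/
def xiRR (a : ℝ) (v : Fin (p + q) → ℝ) : Measure (Fin (p + q) → ℝ) :=
  (ProbabilityTheory.cond (Measure.pi fun _ : Fin (p + q) => gaussianReal 0 1)
      {d | ∑ i, d i ^ 2 < a}).map
    (fun d j => Real.sqrt (v j) * d j)

/-- The lower incomplete gamma function `γ(b, c) = ∫_0^c y^{b-1} e^{-y} dy`. -/
def incGamma (b c : ℝ) : ℝ := ∫ y in Set.Ioc (0 : ℝ) c, y ^ (b - 1) * Real.exp (-y)

/-! ### Symmetry of the Gaussian measure on a ball -/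

/-- The standard Gaussian measure and the ball `‖x‖ ^ 2 < a` are both invariant under linear
isometries. -/
theorem setIntegral_ball_comp_isometry {E : Type*} [NormedAddCommGroup E] [InnerProductSpace ℝ E]
    [FiniteDimensional ℝ E] [MeasurableSpace E] [BorelSpace E] (a : ℝ) (R : E ≃ₗᵢ[ℝ] E)
    (g : E → ℝ) :
    ∫ x in {x : E | ‖x‖ ^ 2 < a}, g (R x) ∂(stdGaussian E)
      = ∫ x in {x : E | ‖x‖ ^ 2 < a}, g x ∂(stdGaussian E) := by
  have hR : MeasurePreserving R (stdGaussian E) (stdGaussian E) :=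
    ⟨R.continuous.measurable, stdGaussian_map R⟩
  have h := hR.setIntegral_preimage_emb R.toHomeomorph.measurableEmbedding g
    {x : E | ‖x‖ ^ 2 < a}
  simpa using h

theorem setIntegral_ball_inner {E : Type*} [NormedAddCommGroup E] [InnerProductSpace ℝ E]
    [FiniteDimensional ℝ E] [MeasurableSpace E] [BorelSpace E] (a : ℝ) (u : E) :
    ∫ x in {x : E | ‖x‖ ^ 2 < a}, inner ℝ u x ∂(stdGaussian E) = 0 := by
  have h := setIntegral_ball_comp_isometry a (LinearIsometryEquiv.neg ℝ) (fun x : E => inner ℝ u x)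
  simp only [LinearIsometryEquiv.coe_neg, inner_neg_right, integral_neg] at h
  linarith

/-- The quadratic form `u ↦ ∫_{‖x‖² < a} ⟪u, x⟫²` is isometry-invariant, hence a multiple of `‖u‖²`;
the trace identifies the multiple. -/
theorem setIntegral_ball_inner_sq {E : Type*} [NormedAddCommGroup E] [InnerProductSpace ℝ E]
    [FiniteDimensional ℝ E] [MeasurableSpace E] [BorelSpace E] (a : ℝ) (u : E) :
    Module.finrank ℝ E * ∫ x in {x : E | ‖x‖ ^ 2 < a}, (inner ℝ u x) ^ 2 ∂(stdGaussian E)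
      = ‖u‖ ^ 2 * ∫ x in {x : E | ‖x‖ ^ 2 < a}, ‖x‖ ^ 2 ∂(stdGaussian E) := by
  set b := stdOrthonormalBasis ℝ E
  have key : ∀ i, ∫ x in {x : E | ‖x‖ ^ 2 < a}, (inner ℝ u x) ^ 2 ∂(stdGaussian E)
      = ‖u‖ ^ 2 * ∫ x in {x : E | ‖x‖ ^ 2 < a}, (inner ℝ (b i) x) ^ 2 ∂(stdGaussian E) := by
    intro i
    -- `R` is the reflection taking `u` to `‖u‖ • b i`.
    have hn : ‖u‖ = ‖‖u‖ • b i‖ := by simp [norm_smul]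
    have hRu := Submodule.reflection_sub hn
    set R := Submodule.reflection (Submodule.span ℝ {u - ‖u‖ • b i})ᗮ
    rw [← setIntegral_ball_comp_isometry a R (fun x => (inner ℝ (b i) x) ^ 2),
      ← integral_const_mul]
    have h2 := setIntegral_ball_comp_isometry a R (fun x => (inner ℝ (‖u‖ • b i) x) ^ 2)
    rw [← hRu] at h2
    simp only [R.inner_map_map] at h2
    rw [h2, hRu, ← setIntegral_ball_comp_isometry a R]
    simp only [inner_smul_left, mul_pow]
    simp
  have hint : ∀ i, IntegrableOn (fun x : E => (inner ℝ (b i) x) ^ 2) {x : E | ‖x‖ ^ 2 < a}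
      (stdGaussian E) := by
    intro i
    refine Measure.integrableOn_of_bounded (M := a) (measure_ne_top _ _)
      (by fun_prop) ?_
    filter_upwards [ae_restrict_mem (measurableSet_lt (by fun_prop) measurable_const)] with x hx
    have h1 := abs_real_inner_le_norm (b i) x
    rw [b.norm_eq_one, one_mul] at h1
    rw [Real.norm_eq_abs, abs_pow]
    exact (pow_le_pow_left₀ (abs_nonneg _) h1 2).trans (le_of_lt hx)
  calc _ = ∑ i : Fin (Module.finrank ℝ E),
        ∫ x in {x : E | ‖x‖ ^ 2 < a}, (inner ℝ u x) ^ 2 ∂(stdGaussian E) := by simp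
    _ = ‖u‖ ^ 2 * ∑ i, ∫ x in {x : E | ‖x‖ ^ 2 < a}, (inner ℝ (b i) x) ^ 2 ∂(stdGaussian E) := by
        rw [Finset.mul_sum]; exact Finset.sum_congr rfl fun i _ => key i
    _ = _ := by
        rw [← integral_finsetSum _ fun i _ => hint i]
        congr 2
        ext x
        exact b.sum_sq_inner_right x

/-! ### Polar coordinates for the Gaussian measure -/

theorem pi_gaussianReal_eq_withDensity (ι : Type*) [Fintype ι] :
    (Measure.pi fun _ : ι => gaussianReal 0 1)
      = volume.withDensity fun d => ENNReal.ofReal (∏ i, gaussianPDFReal 0 1 (d i)) := by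
  refine Measure.pi_eq fun s hs => ?_
  have hmeas : MeasurableSet (Set.univ.pi s) := MeasurableSet.univ_pi hs
  have hint : Integrable (fun d : ι → ℝ => ∏ i, gaussianPDFReal 0 1 (d i)) :=
    Integrable.fintype_prod (f := fun _ : ι => gaussianPDFReal 0 1)
      fun i => integrable_gaussianPDFReal 0 1
  have hnn : ∀ d : ι → ℝ, 0 ≤ ∏ i, gaussianPDFReal 0 1 (d i) := fun d =>
    Finset.prod_nonneg fun i _ => gaussianPDFReal_nonneg _ _ _
  rw [withDensity_apply _ hmeas, ← ofReal_integral_eq_lintegral_ofReal hint.integrableOn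
    (ae_of_all _ hnn)]
  rw [← integral_indicator hmeas]
  have h1 : (Set.univ.pi s).indicator (fun d : ι → ℝ => ∏ i, gaussianPDFReal 0 1 (d i))
      = fun d => ∏ i, (s i).indicator (gaussianPDFReal 0 1) (d i) := by
    ext d
    by_cases hd : d ∈ Set.univ.pi s
    · rw [Set.indicator_of_mem hd]
      exact Finset.prod_congr rfl fun i _ => (Set.indicator_of_mem (hd i trivial) _).symm
    · rw [Set.indicator_of_notMem hd]
      simp only [Set.mem_pi, Set.mem_univ, true_imp_iff, not_forall] at hd
      obtain ⟨i, hi⟩ := hd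
      exact (Finset.prod_eq_zero (Finset.mem_univ i) (Set.indicator_of_notMem hi _)).symm
  rw [h1, integral_fintype_prod_volume_eq_prod
    (fun i => (s i).indicator (gaussianPDFReal 0 1)), ENNReal.ofReal_prod_of_nonneg]
  · refine Finset.prod_congr rfl fun i _ => ?_
    rw [integral_indicator (hs i), gaussianReal_apply_eq_integral _ one_ne_zero]
  · exact fun i _ => integral_nonneg fun x =>
      Set.indicator_nonneg (fun y _ => gaussianPDFReal_nonneg _ _ _) x

/-- Polar coordinates for the standard Gaussian measure. The constant `K` is left unspecified, since
only ratios of such integrals matter. -/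
theorem integral_norm_stdGaussian (ι : Type*) [Fintype ι] [Nonempty ι] :
    ∃ K : ℝ, 0 < K ∧ ∀ g : ℝ → ℝ, ∫ x, g ‖x‖ ∂(stdGaussian (EuclideanSpace ℝ ι))
      = K * ∫ y in Set.Ioi (0 : ℝ), y ^ (Fintype.card ι - 1) * (Real.exp (-y ^ 2 / 2) * g y) := by
  set C : ℝ := (√(2 * Real.pi))⁻¹ ^ Fintype.card ι
  have hC : 0 < C := by positivity
  refine ⟨C * (Fintype.card ι * (volume : Measure (EuclideanSpace ℝ ι)).real (Metric.ball 0 1)),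
    ?_, fun g => ?_⟩
  · have : 0 < (volume : Measure (EuclideanSpace ℝ ι)).real (Metric.ball 0 1) :=
      ENNReal.toReal_pos (Metric.measure_ball_pos _ _ one_pos).ne' measure_ball_lt_top.ne
    have : 0 < Fintype.card ι := Fintype.card_pos
    positivity
  have hdens : ∀ d : ι → ℝ, ∏ i, gaussianPDFReal 0 1 (d i)
      = C * Real.exp (-‖WithLp.toLp 2 d‖ ^ 2 / 2) := by
    intro d
    simp only [gaussianPDFReal_def, Finset.prod_mul_distrib, ← Real.exp_sum, C]
    rw [EuclideanSpace.real_norm_sq_eq]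
    simp [Finset.sum_div, Finset.sum_neg_distrib, neg_div]
  have h1 := integral_fun_norm_addHaar (volume : Measure (EuclideanSpace ℝ ι))
    (fun y => Real.exp (-y ^ 2 / 2) * g y)
  simp only [finrank_euclideanSpace, smul_eq_mul, nsmul_eq_mul] at h1
  have hemb : MeasurableEmbedding (WithLp.toLp 2 : (ι → ℝ) → EuclideanSpace ℝ ι) :=
    (MeasurableEquiv.toLp 2 (ι → ℝ)).measurableEmbedding
  rw [mul_assoc C, mul_assoc, ← h1, ← map_pi_eq_stdGaussian, hemb.integral_map,
    pi_gaussianReal_eq_withDensity,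
    integral_withDensity_eq_integral_toReal_smul (by fun_prop) (by simp),
    ← (PiLp.volume_preserving_toLp ι).integral_comp hemb, ← integral_const_mul]
  refine integral_congr_ae (ae_of_all _ fun d => ?_)
  have : 0 ≤ C * Real.exp (-‖WithLp.toLp 2 d‖ ^ 2 / 2) := by positivity
  simp only [hdens, smul_eq_mul, ENNReal.toReal_ofReal this]
  simp [mul_assoc]

/-- The substitution `t = y² / 2`. The integrals need not converge: both sides are `0` together
when they do not. -/
theorem integral_radial_eq_incGamma (a s : ℝ) :
    ∫ y in Set.Ioi (0 : ℝ), {y : ℝ | y ^ 2 < a}.indicator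
        (fun y => y ^ (2 * s - 1) * Real.exp (-y ^ 2 / 2)) y
      = 2 ^ (s - 1) * incGamma s (a / 2) := by
  set h : ℝ → ℝ := (Set.Iio a).indicator fun t => 2⁻¹ * (t ^ (s - 1) * Real.exp (-t / 2)) with hh
  have e1 : ∫ y in Set.Ioi (0 : ℝ), {y : ℝ | y ^ 2 < a}.indicator
        (fun y => y ^ (2 * s - 1) * Real.exp (-y ^ 2 / 2)) y = ∫ t in Set.Ioi (0 : ℝ), h t := by
    -- `h (y ^ 2)` times `2 * y` is the integrand on the left; the scaling `t = 2 * x` comes after.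
    rw [← integral_comp_rpow_Ioi_of_pos (g := h) two_pos]
    refine setIntegral_congr_fun measurableSet_Ioi fun y hy => ?_
    have hy : 0 < y := hy
    by_cases hya : y ^ 2 < a
    · simp only [h, Set.indicator, Set.mem_ofPred_eq, Set.mem_Iio, Real.rpow_two, hya, if_true,
        smul_eq_mul]
      have : y ^ (2 * s - 1) = y * (y ^ 2) ^ (s - 1) := by
        rw [← Real.rpow_natCast y 2, ← Real.rpow_mul hy.le]
        nth_rw 2 [← Real.rpow_one y]
        rw [← Real.rpow_add hy]
        congr 1; push_cast; ring
      rw [this]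
      norm_num
      ring
    · simp [h, Set.indicator, hya]
  have e2 := integral_comp_mul_left_Ioi h 0 two_pos
  rw [mul_zero, smul_eq_mul] at e2
  have e3 : ∫ x in Set.Ioi (0 : ℝ), h (2 * x) = 2⁻¹ * (2 ^ (s - 1) * incGamma s (a / 2)) := by
    rw [incGamma, integral_Ioc_eq_integral_Ioo, ← integral_const_mul, ← integral_const_mul]
    have : Set.Ioo (0 : ℝ) (a / 2) = Set.Ioi 0 ∩ Set.Iio (a / 2) := rfl
    rw [this, ← setIntegral_indicator measurableSet_Iio]
    refine setIntegral_congr_fun measurableSet_Ioi fun x hx => ?_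
    have hx : 0 < x := hx
    have : 2 * x < a ↔ x < a / 2 := by constructor <;> intro <;> linarith
    by_cases hxa : x < a / 2
    · simp only [h, Set.indicator, Set.mem_Iio, this, hxa, if_true]
      rw [Real.mul_rpow two_pos.le hx.le, show -(2 * x) / 2 = -x by ring]
      ring
    · simp [h, Set.indicator, this, hxa]
  rw [e1]
  linarith

/-! ### The incomplete gamma function -/

theorem incGamma_integrand_integrable {b : ℝ} (hb : 0 < b) (c : ℝ) :
    IntegrableOn (fun y : ℝ => y ^ (b - 1) * Real.exp (-y)) (Set.Ioc 0 c) := by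
  have := (Real.GammaIntegral_convergent hb).mono_set (show Set.Ioc 0 c ⊆ Set.Ioi 0 from fun _ hy => hy.1)
  simpa only [mul_comm] using this

theorem incGamma_pos {b c : ℝ} (hb : 0 < b) (hc : 0 < c) : 0 < incGamma b c := by
  rw [incGamma, setIntegral_pos_iff_support_of_nonneg_ae _ (incGamma_integrand_integrable hb c)]
  · have : Set.Ioc 0 c ⊆ (Function.support fun y : ℝ => y ^ (b - 1) * Real.exp (-y)) := by
      intro y hy
      have := hy.1
      exact (by positivity : 0 < y ^ (b - 1) * Real.exp (-y)).ne'
    rw [Set.inter_eq_self_of_subset_right this]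
    simpa using hc
  · filter_upwards [ae_restrict_mem measurableSet_Ioc] with y hy
    have := hy.1
    simp only [Pi.zero_apply]
    positivity

/-- Integration by parts: the derivative of `y ^ b * e ^ (-y)` is
`b * y ^ (b - 1) * e ^ (-y) - y ^ b * e ^ (-y)`. -/
theorem incGamma_add_one {b c : ℝ} (hb : 0 < b) (hc : 0 ≤ c) :
    incGamma (b + 1) c = b * incGamma b c - c ^ b * Real.exp (-c) := by
  have i1 := incGamma_integrand_integrable hb c
  have i2 := incGamma_integrand_integrable (b := b + 1) (by linarith) c
  have h := intervalIntegral.integral_eq_sub_of_hasDerivAt_of_le hc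
    (f := fun y : ℝ => y ^ b * Real.exp (-y))
    (f' := fun y => b * (y ^ (b - 1) * Real.exp (-y)) - y ^ (b + 1 - 1) * Real.exp (-y))
    (by
      refine ContinuousOn.mul (fun y _ => ?_) (by fun_prop)
      exact (Real.continuousAt_rpow_const y b (Or.inr hb.le)).continuousWithinAt)
    (fun y hy => by
      have h1 := Real.hasDerivAt_rpow_const (x := y) (p := b) (Or.inl hy.1.ne')
      have h2 := (hasDerivAt_neg y).exp
      convert! h1.mul h2 using 1
      rw [add_sub_cancel_right]; ring)
    ((intervalIntegrable_iff_integrableOn_Ioc_of_le hc).2 ((i1.const_mul b).sub i2))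
  rw [intervalIntegral.integral_of_le hc, integral_sub (i1.const_mul b) i2,
    integral_const_mul, Real.zero_rpow hb.ne'] at h
  simp only [incGamma]
  linarith

theorem incGamma_ratio_lt_one {b c : ℝ} (hb : 0 < b) (hc : 0 < c) :
    b⁻¹ * incGamma (b + 1) c / incGamma b c < 1 := by
  have h0 := incGamma_pos hb hc
  rw [div_lt_one h0, inv_mul_lt_iff₀ hb, incGamma_add_one hb hc.le]
  have : 0 < c ^ b * Real.exp (-c) := by positivity
  linarith

/-! ### Second moments of the truncated Gaussian -/

/-- `E[‖x‖² | ‖x‖² < a] = 2 γ(n/2 + 1, a/2) / γ(n/2, a/2)` for a standard Gaussian `x` in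
dimension `n`; the conditioning event has positive probability. -/
theorem setIntegral_ball_norm_sq (ι : Type*) [Fintype ι] [Nonempty ι] {a : ℝ} (ha : 0 < a) :
    0 < (stdGaussian (EuclideanSpace ℝ ι)).real {x | ‖x‖ ^ 2 < a} ∧
    (∫ x in {x : EuclideanSpace ℝ ι | ‖x‖ ^ 2 < a}, ‖x‖ ^ 2 ∂(stdGaussian (EuclideanSpace ℝ ι)))
        / (stdGaussian (EuclideanSpace ℝ ι)).real {x | ‖x‖ ^ 2 < a}
      = 2 * incGamma (Fintype.card ι / 2 + 1) (a / 2) / incGamma (Fintype.card ι / 2) (a / 2) := by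
  obtain ⟨K, hK, hrad⟩ := integral_norm_stdGaussian ι
  have hn : 1 ≤ Fintype.card ι := Fintype.card_pos
  have hn' : (0 : ℝ) < Fintype.card ι := by exact_mod_cast hn
  have hS : MeasurableSet {x : EuclideanSpace ℝ ι | ‖x‖ ^ 2 < a} :=
    measurableSet_lt (by fun_prop) measurable_const
  -- Only `k = 0` (the probability of the ball) and `k = 1` are needed.
  have main : ∀ k : ℕ, ∫ x in {x : EuclideanSpace ℝ ι | ‖x‖ ^ 2 < a}, (‖x‖ ^ 2) ^ k
        ∂(stdGaussian (EuclideanSpace ℝ ι))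
      = K * (2 ^ (Fintype.card ι / 2 + k - 1 : ℝ)
          * incGamma (Fintype.card ι / 2 + k) (a / 2)) := by
    intro k
    rw [← integral_indicator hS, ← integral_radial_eq_incGamma]
    refine (hrad ({y : ℝ | y ^ 2 < a}.indicator fun y => (y ^ 2) ^ k)).trans ?_
    congr 1
    refine setIntegral_congr_fun measurableSet_Ioi fun y hy => ?_
    have hy : 0 < y := hy
    by_cases hya : y ^ 2 < a
    · simp only [Set.indicator, Set.mem_ofPred_eq, hya, if_true]
      have : y ^ (2 * (Fintype.card ι / 2 + k : ℝ) - 1)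
          = y ^ (Fintype.card ι - 1) * (y ^ 2) ^ k := by
        rw [← pow_mul, ← pow_add, ← Real.rpow_natCast]
        congr 1
        push_cast [hn]
        ring
      rw [this]
      ring
    · simp [Set.indicator, hya]
  have h0 := main 0
  have h1 := main 1
  simp only [pow_zero, pow_one, Nat.cast_zero, Nat.cast_one, add_zero, add_sub_cancel_right,
    integral_const, smul_eq_mul, mul_one, measureReal_restrict_apply_univ] at h0 h1
  have hpos := incGamma_pos (b := Fintype.card ι / 2) (by positivity) (half_pos ha)
  have h2 : (2 : ℝ) ^ (Fintype.card ι / 2 : ℝ) = 2 * 2 ^ (Fintype.card ι / 2 - 1 : ℝ) := by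
    rw [Real.rpow_sub_one two_ne_zero]; ring
  rw [h0, h1, h2]
  have h3 : (0 : ℝ) < 2 ^ (Fintype.card ι / 2 - 1 : ℝ) := by positivity
  refine ⟨by positivity, ?_⟩
  field_simp

/-- Variance of a linear functional of a standard Gaussian vector `d` conditioned on `∑ d i ^ 2 < a`. -/
theorem variance_truncated_gaussian {ι : Type*} [Fintype ι] [Nonempty ι] {a : ℝ} (ha : 0 < a)
    (u : ι → ℝ) :
    variance (fun d => ∑ i, u i * d i)
        (ProbabilityTheory.cond (Measure.pi fun _ : ι => gaussianReal 0 1) {d | ∑ i, d i ^ 2 < a})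
      = (2 / (Fintype.card ι : ℝ) * incGamma (Fintype.card ι / 2 + 1) (a / 2)
          / incGamma (Fintype.card ι / 2) (a / 2)) * ∑ i, u i ^ 2 := by
  set P := Measure.pi fun _ : ι => gaussianReal 0 1
  set U := WithLp.toLp 2 u
  set S := {x : EuclideanSpace ℝ ι | ‖x‖ ^ 2 < a}
  have hT : MeasurePreserving (WithLp.toLp 2 : (ι → ℝ) → EuclideanSpace ℝ ι) P
      (stdGaussian (EuclideanSpace ℝ ι)) := ⟨by fun_prop, map_pi_eq_stdGaussian⟩
  have hemb : MeasurableEmbedding (WithLp.toLp 2 : (ι → ℝ) → EuclideanSpace ℝ ι) :=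
    (MeasurableEquiv.toLp 2 (ι → ℝ)).measurableEmbedding
  have hpre : {d : ι → ℝ | ∑ i, d i ^ 2 < a} = WithLp.toLp 2 ⁻¹' S := by
    ext d; simp [S, EuclideanSpace.real_norm_sq_eq]
  have hin : ∀ d : ι → ℝ, ∑ i, u i * d i = inner ℝ U (WithLp.toLp 2 d) := by
    intro d; simp [U, PiLp.inner_apply, mul_comm]
  have hcond : ∀ g : EuclideanSpace ℝ ι → ℝ,
      ∫ d, g (WithLp.toLp 2 d) ∂(ProbabilityTheory.cond P (WithLp.toLp 2 ⁻¹' S))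
      = ((stdGaussian (EuclideanSpace ℝ ι)).real S)⁻¹
        * ∫ x in S, g x ∂(stdGaussian (EuclideanSpace ℝ ι)) := by
    intro g
    rw [ProbabilityTheory.cond, integral_smul_measure, hT.setIntegral_preimage_emb hemb,
      hT.measure_preimage_emb hemb, ENNReal.toReal_inv, smul_eq_mul, Measure.real]
  obtain ⟨hpos, hratio⟩ := setIntegral_ball_norm_sq ι ha
  have hsq := setIntegral_ball_inner_sq a U
  have hn : (0 : ℝ) < Fintype.card ι := by exact_mod_cast Fintype.card_pos
  have hU : ‖U‖ ^ 2 = ∑ i, u i ^ 2 := by rw [EuclideanSpace.real_norm_sq_eq]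
  rw [finrank_euclideanSpace, hU] at hsq
  rw [hpre]
  simp only [hin]
  rw [variance_of_integral_eq_zero (by fun_prop)]
  · rw [hcond fun x => (inner ℝ U x) ^ 2]
    have e : ∫ x in S, (inner ℝ U x) ^ 2 ∂(stdGaussian (EuclideanSpace ℝ ι))
        = (Fintype.card ι : ℝ)⁻¹ * ((∑ i, u i ^ 2) *
          ∫ x in S, ‖x‖ ^ 2 ∂(stdGaussian (EuclideanSpace ℝ ι))) := by
      rw [← hsq]; field_simp; rfl
    rw [e]
    calc _ = (Fintype.card ι : ℝ)⁻¹ * (∑ i, u i ^ 2) *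
          ((∫ x in S, ‖x‖ ^ 2 ∂(stdGaussian (EuclideanSpace ℝ ι)))
            / (stdGaussian (EuclideanSpace ℝ ι)).real S) := by ring
      _ = _ := by rw [hratio]; ring
  · rw [hcond fun x => inner ℝ U x, setIntegral_ball_inner, mul_zero]

/-- Section 4.2: the asymptotic variance of `S` under rerandomization is
`λ₁² + λ₂² β_exᵗ Var(ξ^RR_ex) β_ex = (σ_ε² + v_a Σ β² Var X)/(σ_ε² + Σ β² Var X)`,
with `v_a = (2/(p+q)) γ((p+q)/2+1, a/2)/γ((p+q)/2, a/2) < 1`. -/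
theorem asymptotic_variance_rerandomization
    (hpq : 0 < p + q) (a : ℝ) (ha : 0 < a)
    (βex : Fin q → ℝ) (v : Fin (p + q) → ℝ) (hv : ∀ j, 0 < v j)
    (σeps : ℝ) (hσ : 0 < σeps) :
    (σeps / Real.sqrt (σeps ^ 2 + ∑ j : Fin q, βex j ^ 2 * v (Fin.natAdd p j))) ^ 2
        + ((Real.sqrt (σeps ^ 2 + ∑ j : Fin q, βex j ^ 2 * v (Fin.natAdd p j)))⁻¹) ^ 2 *
          variance (fun w => ∑ j : Fin q, βex j * w (Fin.natAdd p j)) (xiRR p q a v)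
      = (σeps ^ 2 + ((2 / (p + q : ℝ)) *
            incGamma ((p + q : ℝ) / 2 + 1) (a / 2) / incGamma ((p + q : ℝ) / 2) (a / 2)) *
          ∑ j : Fin q, βex j ^ 2 * v (Fin.natAdd p j)) / (σeps ^ 2 + ∑ j : Fin q, βex j ^ 2 * v (Fin.natAdd p j))
    ∧ (2 / (p + q : ℝ)) *
        incGamma ((p + q : ℝ) / 2 + 1) (a / 2) / incGamma ((p + q : ℝ) / 2) (a / 2) < 1 := by
  have hb : (0 : ℝ) < (p + q : ℝ) / 2 := by
    have : (0 : ℝ) < ((p + q : ℕ) : ℝ) := by exact_mod_cast hpq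
    push_cast at this
    linarith
  have hvar : variance (fun w => ∑ j : Fin q, βex j * w (Fin.natAdd p j)) (xiRR p q a v)
      = ((2 / (p + q : ℝ)) *
            incGamma ((p + q : ℝ) / 2 + 1) (a / 2) / incGamma ((p + q : ℝ) / 2) (a / 2)) *
          ∑ j : Fin q, βex j ^ 2 * v (Fin.natAdd p j) := by
    have : Nonempty (Fin (p + q)) := ⟨⟨0, hpq⟩⟩
    -- The statistic is `∑ u i * d i`, with `u` zero on the first `p` coordinates.
    have h := variance_truncated_gaussian ha
      (Fin.addCases (fun _ : Fin p => (0 : ℝ)) fun j : Fin q => βex j * √(v (Fin.natAdd p j)))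
    simp only [Fin.sum_univ_add, Fin.addCases_left, Fin.addCases_right, zero_mul,
      Finset.sum_const_zero, zero_add, Fintype.card_fin, Nat.cast_add, mul_pow,
      Real.sq_sqrt (hv _).le, ne_eq, OfNat.ofNat_ne_zero, not_false_eq_true, zero_pow] at h
    rw [xiRR, variance_map (Measurable.aemeasurable (by fun_prop)) (Measurable.aemeasurable (by fun_prop))]
    simp only [Fin.sum_univ_add, Function.comp_def, ← mul_assoc]
    exact h
  constructor
  · rw [hvar]
    have hs : 0 ≤ ∑ j : Fin q, βex j ^ 2 * v (Fin.natAdd p j) :=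
      Finset.sum_nonneg fun j _ => mul_nonneg (sq_nonneg _) (hv _).le
    have hw : 0 < σeps ^ 2 + ∑ j : Fin q, βex j ^ 2 * v (Fin.natAdd p j) := by positivity
    rw [div_pow, inv_pow, Real.sq_sqrt hw.le, inv_mul_eq_div, ← add_div]
  · have h := incGamma_ratio_lt_one hb (half_pos ha)
    rwa [inv_div] at h

end CARPaper
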